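/- arXiv:1504.07599 — 3 statements merged into one kernel-verified Lean document; each statement's English description precedes it below -/
import Mathlib

section
/- Let α ≥ 0 and β > 0 be real numbers, let u : ℤ → ℝ, and let λ satisfy 0 ≤ λ ≤ (√(α² + 8β) − α)/(4β). Define the two-derivative building block update u'_j = u_j + α·λ·(u_{j+1} − u_j) + β·λ²·(u_{j+1} − 2u_j + u_{j−1}) for all j ∈ ℤ. Then ‖u'‖_TV ≤ ‖u‖_TV, i.e., the scheme is total variation diminishing. -/
/-!
The total variation on sequences indexed by `ℤ` is a `[0, ∞]`-valued seminorm invariant under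
shifts, so an average of shifts of `u` has at most the total variation of `u`. The scheme
`u'_j = (1 - αλ - 2βλ²) u_j + (αλ + βλ²) u_{j+1} + βλ² u_{j-1}` is such an average as soon as
its coefficients are nonnegative, since they sum to `1`. The step-size bound is the positive root
of `2βλ² + αλ - 1` and makes the first coefficient nonnegative.
-/

open scoped ENNReal

section TotalVariation

variable {𝕜 E ι : Type*} [NormedField 𝕜] [SeminormedAddCommGroup E]

/-- The total variation `‖u‖_TV` of a doubly infinite sequence, as a sum in `[0, ∞]`, so that no
summability has to be assumed. -/
noncomputable def totalVariation (u : ℤ → E) : ℝ≥0∞ :=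
  ∑' j : ℤ, ‖u (j + 1) - u j‖ₑ

lemma totalVariation_zero : totalVariation (0 : ℤ → E) = 0 := by
  simp [totalVariation, enorm]

lemma totalVariation_add_le (u v : ℤ → E) :
    totalVariation (u + v) ≤ totalVariation u + totalVariation v := by
  simp only [totalVariation, ← ENNReal.tsum_add, Pi.add_apply, add_sub_add_comm]
  exact ENNReal.tsum_le_tsum fun j ↦ ENNReal.coe_le_coe.mpr (nnnorm_add_le _ _)

lemma totalVariation_const_smul [NormedSpace 𝕜 E] (c : 𝕜) (u : ℤ → E) :
    totalVariation (c • u) = ‖c‖ₑ * totalVariation u := by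
  simp only [totalVariation, Pi.smul_apply, ← smul_sub, enorm_smul, ENNReal.tsum_mul_left]

lemma totalVariation_comp_add_right (u : ℤ → E) (k : ℤ) :
    totalVariation (fun j ↦ u (j + k)) = totalVariation u := by
  simp only [totalVariation, add_right_comm _ (1 : ℤ) k]
  exact (Equiv.addRight k).tsum_eq fun j ↦ ‖u (j + 1) - u j‖ₑ

lemma totalVariation_sum_smul_comp_add_right_le [NormedSpace 𝕜 E] (s : Finset ι) (w : ι → 𝕜)
    (k : ι → ℤ) (u : ℤ → E) :
    totalVariation (∑ i ∈ s, w i • fun j ↦ u (j + k i)) ≤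
      (∑ i ∈ s, ‖w i‖ₑ) * totalVariation u :=
  calc totalVariation (∑ i ∈ s, w i • fun j ↦ u (j + k i))
      ≤ ∑ i ∈ s, totalVariation (w i • fun j ↦ u (j + k i)) :=
        Finset.le_sum_of_subadditive _ totalVariation_zero.le totalVariation_add_le _ _
    _ = (∑ i ∈ s, ‖w i‖ₑ) * totalVariation u := by
        simp only [totalVariation_const_smul, totalVariation_comp_add_right, Finset.sum_mul]

lemma totalVariation_sum_smul_comp_add_right_le_of_sum_eq_one [NormedSpace ℝ E] {s : Finset ι}
    {w : ι → ℝ} (hw : ∀ i ∈ s, 0 ≤ w i) (hsum : ∑ i ∈ s, w i = 1) (k : ι → ℤ) (u : ℤ → E) :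
    totalVariation (∑ i ∈ s, w i • fun j ↦ u (j + k i)) ≤ totalVariation u := by
  have hnorm : ∑ i ∈ s, ‖w i‖ₑ = 1 := by
    rw [Finset.sum_congr rfl fun i hi ↦ Real.enorm_of_nonneg (hw i hi),
      ← ENNReal.ofReal_sum_of_nonneg hw, hsum, ENNReal.ofReal_one]
  simpa only [hnorm, one_mul] using totalVariation_sum_smul_comp_add_right_le s w k u

end TotalVariation

lemma quadratic_le_one_of_le_root {α β x : ℝ} (hβ : 0 < β) (hx : 0 ≤ x)
    (hroot : x ≤ (√(α ^ 2 + 8 * β) - α) / (4 * β)) : α * x + 2 * (β * x ^ 2) ≤ 1 := by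
  have hupper : 4 * β * x + α ≤ √(α ^ 2 + 8 * β) := by
    rw [le_div_iff₀ (by positivity)] at hroot
    linarith
  have hlower : -√(α ^ 2 + 8 * β) ≤ 4 * β * x + α := by
    have hα : -√(α ^ 2 + 8 * β) ≤ α :=
      neg_le.mp <| Real.le_sqrt_of_sq_le <| by rw [neg_sq]; linarith
    have hβx : 0 ≤ 4 * β * x := by positivity
    linarith
  have hsq : (4 * β * x + α) ^ 2 ≤ α ^ 2 + 8 * β :=
    (Real.sq_le (by positivity)).mpr ⟨hlower, hupper⟩
  -- Completing the square: `hsq` is the claim multiplied by `8β`.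
  refine le_of_mul_le_mul_left ?_ (by positivity : 0 < 8 * β)
  linarith

theorem building_block_tvd_general {E : Type*} [SeminormedAddCommGroup E] [NormedSpace ℝ E]
    {α β lam : ℝ} (hcenter : α * lam + 2 * (β * lam ^ 2) ≤ 1)
    (hright : 0 ≤ α * lam + β * lam ^ 2) (hleft : 0 ≤ β * lam ^ 2) {u u' : ℤ → E}
    (hu' : ∀ j : ℤ, u' j = u j + (α * lam) • (u (j + 1) - u j)
      + (β * lam ^ 2) • (u (j + 1) - (2 : ℝ) • u j + u (j - 1))) :
    totalVariation u' ≤ totalVariation u := by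
  let w : Fin 3 → ℝ :=
    ![1 - (α * lam + 2 * (β * lam ^ 2)), α * lam + β * lam ^ 2, β * lam ^ 2]
  let k : Fin 3 → ℤ := ![0, 1, -1]
  have hw : ∀ i ∈ Finset.univ, 0 ≤ w i := by
    simpa [w, Fin.forall_fin_succ] using ⟨hcenter, hright, hleft⟩
  have hsum : ∑ i, w i = 1 := by
    simp only [w, Fin.sum_univ_three, Matrix.cons_val]
    ring
  have haverage : u' = ∑ i, w i • fun j ↦ u (j + k i) := by
    ext j
    simp only [hu', w, k, Fin.sum_univ_three, Matrix.cons_val, Pi.add_apply, Pi.smul_apply,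
      add_zero, ← sub_eq_add_neg]
    module
  rw [haverage]
  exact totalVariation_sum_smul_comp_add_right_le_of_sum_eq_one hw hsum k u

/-- The two-derivative building block scheme
`u'_j = u_j + αλ·(u_{j+1} − u_j) + βλ²·(u_{j+1} − 2u_j + u_{j−1})` is total variation
diminishing for `0 ≤ λ ≤ (√(α² + 8β) − α)/(4β)`. -/
theorem building_block_tvd (α β : ℝ) (hα : 0 ≤ α) (hβ : 0 < β)
    (u u' : ℤ → ℝ) (lam : ℝ)
    (h0 : 0 ≤ lam) (h1 : lam ≤ (Real.sqrt (α ^ 2 + 8 * β) - α) / (4 * β))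
    (hu' : ∀ j : ℤ, u' j = u j + α * lam * (u (j + 1) - u j)
      + β * lam ^ 2 * (u (j + 1) - 2 * u j + u (j - 1))) :
    (∑' j : ℤ, ENNReal.ofReal |u' (j + 1) - u' j|) ≤
      ∑' j : ℤ, ENNReal.ofReal |u (j + 1) - u j| := by
  simpa only [totalVariation, Real.enorm_eq_ofReal_abs] using
    building_block_tvd_general (quadratic_le_one_of_le_root hβ h0 h1) (by positivity)
      (by positivity) hu'
end

section
/- Let V be a real normed vector space, F, Ḟ : V → V, Δt_FE > 0 and K > 0. Assume F satisfies the forward Euler condition and Ḟ satisfies the second derivative condition with constant K. Define the half-step Taylor map T(v) = v + (Δt/2)·F(v) + (Δt²/8)·Ḟ(v). Then the two-stage method u* = T(u), u^{n+1} = u* + (Δt/2)·F(u*) + (Δt²/8)·Ḟ(u*) (two Taylor series steps of size Δt/2) satisfies ‖u^{n+1}‖ ≤ ‖u‖ for every u ∈ V and every Δt with 0 ≤ Δt ≤ (2K·√(K²+2) − 2K²)·Δt_FE. -/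
/-!
Let `φ` be the norm, or any quasiconvex functional. With `a = h / τ` and `b = h² / (2K²τ²)`, where
`τ = Δt_FE`, a Taylor step of size `h` is the combination
`v + h F v + (h² / 2) Ḟ v = (1 - a - b) v + a (v + τ F v) + b (v + (Kτ)² Ḟ v)`
of three points at which `φ` is at most `φ v`. It is convex as long as `a + b ≤ 1`, and the largest
such `h` is `(K√(K² + 2) - K²) τ`. Sublevel sets of `φ` are therefore invariant under each step.
-/

open Set

lemma add_smul_add_smul_mem_of_convex {𝕜 E : Type*} [Field 𝕜] [LinearOrder 𝕜]
    [IsStrictOrderedRing 𝕜] [AddCommGroup E] [Module 𝕜 E] {s : Set E} (hs : Convex 𝕜 s) {v x y : E}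
    (hv : v ∈ s) (hx : v + x ∈ s) (hy : v + y ∈ s) {a b : 𝕜} (ha : 0 ≤ a) (hb : 0 ≤ b)
    (hab : a + b ≤ 1) : v + a • x + b • y ∈ s := by
  have hcombination : v + a • x + b • y = ∑ i, ![1 - a - b, a, b] i • ![v, v + x, v + y] i := by
    simp only [Fin.sum_univ_three, Matrix.cons_val]
    module
  rw [hcombination]
  refine hs.sum_mem ?_ ?_ ?_
  · simp [Fin.forall_fin_succ, sub_sub, ha, hb, hab]
  · simp only [Fin.sum_univ_three, Matrix.cons_val]
    ring
  · simp [Fin.forall_fin_succ, hv, hx, hy]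

lemma add_sq_div_two_mul_sq_le_one_iff {K x : ℝ} (hK : 0 < K) (hx : 0 ≤ x) :
    x + x ^ 2 / (2 * K ^ 2) ≤ 1 ↔ x ≤ K * √(K ^ 2 + 2) - K ^ 2 := by
  have hsq : (K * √(K ^ 2 + 2)) ^ 2 = K ^ 2 * (K ^ 2 + 2) := by
    rw [mul_pow, Real.sq_sqrt (by positivity)]
  calc x + x ^ 2 / (2 * K ^ 2) ≤ 1
      ↔ x * (2 * K ^ 2) + x ^ 2 ≤ 2 * K ^ 2 := by
        rw [← le_sub_iff_add_le', div_le_iff₀ (by positivity), sub_mul, one_mul,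
          le_sub_iff_add_le']
    _ ↔ (x + K ^ 2) ^ 2 ≤ (K * √(K ^ 2 + 2)) ^ 2 := by
        rw [hsq]; constructor <;> intro h <;> linarith
    _ ↔ x + K ^ 2 ≤ K * √(K ^ 2 + 2) :=
        pow_le_pow_iff_left₀ (by positivity) (by positivity) two_ne_zero
    _ ↔ x ≤ K * √(K ^ 2 + 2) - K ^ 2 := le_sub_iff_add_le.symm

/-- One step of size `h` of the second-order Taylor series method for `u' = F u`, where `Fd` stands
for the second time derivative `Ḟ`. It is an arbitrary map, not tied to the derivative of `F`. -/
noncomputable def taylorStep {V : Type*} [AddCommGroup V] [Module ℝ V] (F Fd : V → V) (h : ℝ)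
    (v : V) : V :=
  v + h • F v + (h ^ 2 / 2) • Fd v

section TaylorStep

variable {V β : Type*} [AddCommGroup V] [Module ℝ V] [Preorder β] {φ : V → β} {F Fd : V → V}
  {τ K h : ℝ}

lemma apply_taylorStep_le (hφ : QuasiconvexOn ℝ univ φ) (hτ : 0 < τ) (hK : 0 < K) {v : V}
    (hF : φ (v + τ • F v) ≤ φ v) (hFd : φ (v + (K * τ) ^ 2 • Fd v) ≤ φ v)
    (hh₀ : 0 ≤ h) (hh : h ≤ (K * √(K ^ 2 + 2) - K ^ 2) * τ) :
    φ (taylorStep F Fd h v) ≤ φ v := by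
  have hweights : h / τ + (h / τ) ^ 2 / (2 * K ^ 2) ≤ 1 :=
    (add_sq_div_two_mul_sq_le_one_iff hK (by positivity)).2 ((div_le_iff₀ hτ).2 hh)
  have hmem : v + (h / τ) • τ • F v + ((h / τ) ^ 2 / (2 * K ^ 2)) • (K * τ) ^ 2 • Fd v ∈
      {w ∈ univ | φ w ≤ φ v} :=
    add_smul_add_smul_mem_of_convex (hφ (φ v)) ⟨mem_univ _, le_rfl⟩ ⟨mem_univ _, hF⟩
      ⟨mem_univ _, hFd⟩ (by positivity) (by positivity) hweights
  have hFd_coeff : (h / τ) ^ 2 / (2 * K ^ 2) * (K * τ) ^ 2 = h ^ 2 / 2 := by field_simp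
  rw [smul_smul, smul_smul, div_mul_cancel₀ h hτ.ne', hFd_coeff] at hmem
  exact hmem.2

theorem double_taylor_ssp_general (hφ : QuasiconvexOn ℝ univ φ) (hτ : 0 < τ) (hK : 0 < K)
    (hF : ∀ v, φ (v + τ • F v) ≤ φ v) (hFd : ∀ v, φ (v + (K * τ) ^ 2 • Fd v) ≤ φ v)
    (hh₀ : 0 ≤ h) (hh : h ≤ (K * √(K ^ 2 + 2) - K ^ 2) * τ) (n : ℕ) (u : V) :
    φ ((taylorStep F Fd h)^[n] u) ≤ φ u := by
  have hinvariant : MapsTo (taylorStep F Fd h) {w | φ w ≤ φ u} {w | φ w ≤ φ u} := fun w hw ↦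
    (apply_taylorStep_le hφ hτ hK (hF w) (hFd w) hh₀ hh).trans hw
  exact hinvariant.iterate n le_rfl

end TaylorStep

/-- Two Taylor series steps of size `Δt/2` form a two-stage
second-order method which is SSP with coefficient `2K·√(K²+2) − 2K²`. -/
theorem double_taylor_ssp {V : Type*} [NormedAddCommGroup V] [NormedSpace ℝ V]
    (F Fd : V → V) (dtFE K : ℝ) (hdtFE : 0 < dtFE) (hK : 0 < K)
    (hFE : ∀ v : V, ∀ t : ℝ, 0 ≤ t → t ≤ dtFE → ‖v + t • F v‖ ≤ ‖v‖)
    (hSD : ∀ v : V, ∀ t : ℝ, 0 ≤ t → t ≤ K * dtFE → ‖v + t ^ 2 • Fd v‖ ≤ ‖v‖)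
    (dt : ℝ) (hdt0 : 0 ≤ dt)
    (hdt : dt ≤ (2 * K * Real.sqrt (K ^ 2 + 2) - 2 * K ^ 2) * dtFE)
    (T : V → V)
    (hT : ∀ v : V, T v = v + (dt / 2) • F v + (dt ^ 2 / 8) • Fd v) :
    ∀ u : V, ‖T (T u)‖ ≤ ‖u‖ := by
  obtain rfl : T = taylorStep F Fd (dt / 2) := by ext v; rw [hT, taylorStep]; module
  exact double_taylor_ssp_general convexOn_univ_norm.quasiconvexOn hdtFE hK
    (fun v ↦ hFE v dtFE hdtFE.le le_rfl) (fun v ↦ hSD v (K * dtFE) (by positivity) le_rfl)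
    (by positivity) (by linarith) 2
end

section
/- Let V be a real normed vector space, F, Ḟ : V → V, Δt_FE > 0 and K > 0. Assume F satisfies the forward Euler condition and Ḟ satisfies the second derivative condition with constant K. Let r > 0 satisfy r⁴ + 4K²r³ − 12K²r² − 24K⁴r + 24K⁴ = 0, r² ≤ 4K², and 4rK² + r² ≤ 8K². Then the unique two-stage fourth-order two-derivative method u* = u + (Δt/2)·F(u) + (Δt²/8)·Ḟ(u), u^{n+1} = u + Δt·F(u) + (Δt²/6)·(Ḟ(u) + 2Ḟ(u*)) satisfies ‖u*‖ ≤ ‖u‖ and ‖u^{n+1}‖ ≤ ‖u‖ for every u ∈ V and every Δt with 0 ≤ Δt ≤ r·Δt_FE. -/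
/-!
Whenever `dt ≤ r * dtFE`, the forward Euler step of size `dt / r` and the second derivative step of
size `(K / r) * dt` do not increase a quasiconvex functional `φ`, such as the norm. Substituting
these two kinds of steps for `F` and `Fd` gives the Shu–Osher form of the method, in which each
stage is a combination of three points whose weights sum to one: identically in `r` for the
intermediate stage, and exactly at the roots of the quartic for the update. When the weights are
nonnegative these are convex combinations of points of the sublevel set `{x | φ x ≤ φ u}`, which is
convex. In terms of `d = 4K² - r²` the quartic equation reads `3(1 - r)d² = 4r³d + (1 + r)r⁴`, so
`d ≥ 0` forces `r < 1`, which is what makes the weight of `u` in the intermediate stage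
nonnegative.
-/

lemma smul_add_smul_add_smul_mem_of_convex {𝕜 V : Type*} [Field 𝕜] [LinearOrder 𝕜]
    [IsStrictOrderedRing 𝕜] [AddCommGroup V] [Module 𝕜 V] {s : Set V} (hs : Convex 𝕜 s)
    {a b c : 𝕜} {x y z : V} (ha : 0 ≤ a) (hb : 0 ≤ b) (hc : 0 ≤ c) (habc : a + b + c = 1)
    (hx : x ∈ s) (hy : y ∈ s) (hz : z ∈ s) : a • x + b • y + c • z ∈ s := by
  have hmem : ∑ i, ![a, b, c] i • ![x, y, z] i ∈ s :=
    hs.sum_mem (by simp [Fin.forall_fin_succ, ha, hb, hc])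
      (by simpa [Fin.sum_univ_three] using habc) (by simp [Fin.forall_fin_succ, hx, hy, hz])
  simpa [Fin.sum_univ_three] using hmem

section Conditions

variable {𝕜 V β : Type*} [Field 𝕜] [LinearOrder 𝕜] [AddCommGroup V]
  [Module 𝕜 V] [LE β]

/-- The forward Euler condition for a functional `φ` in place of the norm: explicit Euler steps for
`F` of size at most `dtFE` do not increase `φ`. -/
def ForwardEulerCondition (φ : V → β) (F : V → V) (dtFE : 𝕜) : Prop :=
  ∀ v : V, ∀ t : 𝕜, 0 ≤ t → t ≤ dtFE → φ (v + t • F v) ≤ φ v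

/-- The second derivative condition with constant `K` for a functional `φ` in place of the norm:
the step of size `t`, in which `Fd` enters with factor `t ^ 2`, does not increase `φ` for
`t ≤ K * dtFE`. -/
def SecondDerivativeCondition (φ : V → β) (Fd : V → V) (dtFE K : 𝕜) : Prop :=
  ∀ v : V, ∀ t : 𝕜, 0 ≤ t → t ≤ K * dtFE → φ (v + t ^ 2 • Fd v) ≤ φ v

variable [IsStrictOrderedRing 𝕜] {φ : V → β} {F Fd : V → V} {dtFE K r dt : 𝕜}

lemma ForwardEulerCondition.le_of_le_mul (hF : ForwardEulerCondition φ F dtFE) (hr : 0 < r)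
    (hdt0 : 0 ≤ dt) (hdt : dt ≤ r * dtFE) (v : V) : φ (v + (dt / r) • F v) ≤ φ v :=
  hF v _ (div_nonneg hdt0 hr.le) ((div_le_iff₀' hr).2 hdt)

lemma SecondDerivativeCondition.le_of_le_mul (hFd : SecondDerivativeCondition φ Fd dtFE K)
    (hK : 0 ≤ K) (hr : 0 < r) (hdt0 : 0 ≤ dt) (hdt : dt ≤ r * dtFE) (v : V) :
    φ (v + (K / r * dt) ^ 2 • Fd v) ≤ φ v := by
  refine hFd v _ (by positivity) ?_
  calc K / r * dt = K * (dt / r) := by ring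
    _ ≤ K * dtFE := mul_le_mul_of_nonneg_left ((div_le_iff₀' hr).2 hdt) hK

end Conditions

section Method

variable {𝕜 V : Type*} [Field 𝕜] [AddCommGroup V] [Module 𝕜 V]

/-- The stage `u*` of the two-stage fourth-order two-derivative method with step size `dt`. -/
def intermediateStage (F Fd : V → V) (dt : 𝕜) (u : V) : V :=
  u + (dt / 2) • F u + (dt ^ 2 / 8) • Fd u

/-- One full step `u ↦ uⁿ⁺¹` of the two-stage fourth-order two-derivative method with step size
`dt`. -/
def twoStageStep (F Fd : V → V) (dt : 𝕜) (u : V) : V :=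
  u + dt • F u + (dt ^ 2 / 6) • (Fd u + (2 : 𝕜) • Fd (intermediateStage F Fd dt u))

variable [CharZero 𝕜] {K r : 𝕜}

lemma intermediateStage_eq_shuOsher (hK : K ≠ 0) (hr : r ≠ 0) (F Fd : V → V) (dt : 𝕜) (u : V) :
    intermediateStage F Fd dt u =
      (1 - (4 * r * K ^ 2 + r ^ 2) / (8 * K ^ 2)) • u + (r / 2) • (u + (dt / r) • F u)
        + (r ^ 2 / (8 * K ^ 2)) • (u + (K / r * dt) ^ 2 • Fd u) := by
  unfold intermediateStage
  match_scalars
  all_goals field_simp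
  all_goals ring

lemma step_weights_sum_eq_one_iff (hK : K ≠ 0) :
    r * (1 - r ^ 2 / (6 * K ^ 2)) + r ^ 2 * (4 * K ^ 2 - r ^ 2) / (24 * K ^ 4)
        + r ^ 2 / (3 * K ^ 2) = 1 ↔
      r ^ 4 + 4 * K ^ 2 * r ^ 3 - 12 * K ^ 2 * r ^ 2 - 24 * K ^ 4 * r + 24 * K ^ 4 = 0 := by
  have hdefect : r * (1 - r ^ 2 / (6 * K ^ 2)) + r ^ 2 * (4 * K ^ 2 - r ^ 2) / (24 * K ^ 4)
      + r ^ 2 / (3 * K ^ 2) - 1 = -(r ^ 4 + 4 * K ^ 2 * r ^ 3 - 12 * K ^ 2 * r ^ 2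
        - 24 * K ^ 4 * r + 24 * K ^ 4) / (24 * K ^ 4) := by
    field_simp
    ring
  have hden : 24 * K ^ 4 ≠ 0 := mul_ne_zero (by norm_num) (pow_ne_zero 4 hK)
  rw [← sub_eq_zero, hdefect, div_eq_zero_iff, or_iff_left hden, neg_eq_zero]

lemma twoStageStep_eq_shuOsher (hK : K ≠ 0) (hr : r ≠ 0)
    (hsum : r * (1 - r ^ 2 / (6 * K ^ 2)) + r ^ 2 * (4 * K ^ 2 - r ^ 2) / (24 * K ^ 4)
      + r ^ 2 / (3 * K ^ 2) = 1)
    (F Fd : V → V) (dt : 𝕜) (u : V) :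
    twoStageStep F Fd dt u =
      (r * (1 - r ^ 2 / (6 * K ^ 2))) • (u + (dt / r) • F u)
        + (r ^ 2 * (4 * K ^ 2 - r ^ 2) / (24 * K ^ 4)) • (u + (K / r * dt) ^ 2 • Fd u)
        + (r ^ 2 / (3 * K ^ 2)) • (intermediateStage F Fd dt u
          + (K / r * dt) ^ 2 • Fd (intermediateStage F Fd dt u)) := by
  unfold twoStageStep
  -- `u*` is to be expanded where it stands alone, but not inside `Fd u*`.
  generalize Fd (intermediateStage F Fd dt u) = w
  unfold intermediateStage
  match_scalars
  · linear_combination -hsum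
  all_goals field_simp
  all_goals ring

end Method

section Monotonicity

variable {𝕜 : Type*} [Field 𝕜] [LinearOrder 𝕜] [IsStrictOrderedRing 𝕜] {dtFE K r dt : 𝕜}

lemma lt_one_of_quartic_eq_zero (hr : 0 < r)
    (hpoly : r ^ 4 + 4 * K ^ 2 * r ^ 3 - 12 * K ^ 2 * r ^ 2
      - 24 * K ^ 4 * r + 24 * K ^ 4 = 0)
    (hrK : r ^ 2 ≤ 4 * K ^ 2) : r < 1 := by
  have hd : 0 ≤ 4 * K ^ 2 - r ^ 2 := sub_nonneg.2 hrK
  have hquad : (1 - r) * (3 * (4 * K ^ 2 - r ^ 2) ^ 2)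
      = 4 * r ^ 3 * (4 * K ^ 2 - r ^ 2) + (1 + r) * r ^ 4 := by
    linear_combination 2 * hpoly
  have hpos : 0 < (1 - r) * (3 * (4 * K ^ 2 - r ^ 2) ^ 2) := by
    rw [hquad]
    exact add_pos_of_nonneg_of_pos (mul_nonneg (by positivity) hd) (by positivity)
  exact sub_pos.1 (pos_of_mul_pos_left hpos (by positivity))

variable {V β : Type*} [AddCommGroup V] [Module 𝕜 V] [Preorder β]

variable {V β : Type*} [AddCommGroup V] [Module 𝕜 V] [Preorder β] {φ : V → β} {F Fd : V → V}

lemma intermediateStage_le (hφ : QuasiconvexOn 𝕜 Set.univ φ) (hK : 0 < K) (hr : 0 < r)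
    (hrK : 4 * r * K ^ 2 + r ^ 2 ≤ 8 * K ^ 2) (hF : ForwardEulerCondition φ F dtFE)
    (hFd : SecondDerivativeCondition φ Fd dtFE K) (hdt0 : 0 ≤ dt) (hdt : dt ≤ r * dtFE) (u : V) :
    φ (intermediateStage F Fd dt u) ≤ φ u := by
  have hweight : 0 ≤ 1 - (4 * r * K ^ 2 + r ^ 2) / (8 * K ^ 2) :=
    sub_nonneg.2 (div_le_one_of_le₀ hrK (by positivity))
  have hsum : 1 - (4 * r * K ^ 2 + r ^ 2) / (8 * K ^ 2) + r / 2 + r ^ 2 / (8 * K ^ 2) = 1 := by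
    field_simp
    ring
  rw [intermediateStage_eq_shuOsher hK.ne' hr.ne']
  exact (smul_add_smul_add_smul_mem_of_convex (hφ (φ u)) hweight (by positivity) (by positivity)
    hsum ⟨trivial, le_rfl⟩ ⟨trivial, hF.le_of_le_mul hr hdt0 hdt u⟩
    ⟨trivial, hFd.le_of_le_mul hK.le hr hdt0 hdt u⟩).2

lemma twoStageStep_le (hφ : QuasiconvexOn 𝕜 Set.univ φ) (hK : 0 < K) (hr : 0 < r)
    (hpoly : r ^ 4 + 4 * K ^ 2 * r ^ 3 - 12 * K ^ 2 * r ^ 2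
      - 24 * K ^ 4 * r + 24 * K ^ 4 = 0)
    (hrK : r ^ 2 ≤ 4 * K ^ 2) (hF : ForwardEulerCondition φ F dtFE)
    (hFd : SecondDerivativeCondition φ Fd dtFE K) (hdt0 : 0 ≤ dt) (hdt : dt ≤ r * dtFE) {u : V}
    (hstage : φ (intermediateStage F Fd dt u) ≤ φ u) : φ (twoStageStep F Fd dt u) ≤ φ u := by
  have hweightF : 0 ≤ r * (1 - r ^ 2 / (6 * K ^ 2)) := by
    refine mul_nonneg hr.le (sub_nonneg.2 (div_le_one_of_le₀ ?_ (by positivity)))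
    linarith [sq_nonneg K]
  have hweightFd : 0 ≤ r ^ 2 * (4 * K ^ 2 - r ^ 2) / (24 * K ^ 4) :=
    div_nonneg (mul_nonneg (sq_nonneg r) (sub_nonneg.2 hrK)) (by positivity)
  have hsum := (step_weights_sum_eq_one_iff hK.ne').2 hpoly
  rw [twoStageStep_eq_shuOsher hK.ne' hr.ne' hsum]
  exact (smul_add_smul_add_smul_mem_of_convex (hφ (φ u)) hweightF hweightFd (by positivity) hsum
    ⟨trivial, hF.le_of_le_mul hr hdt0 hdt u⟩ ⟨trivial, hFd.le_of_le_mul hK.le hr hdt0 hdt u⟩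
    ⟨trivial, (hFd.le_of_le_mul hK.le hr hdt0 hdt _).trans hstage⟩).2

theorem two_stage_fourth_order_ssp_general (hφ : QuasiconvexOn 𝕜 Set.univ φ) (hK : 0 < K)
    (hF : ForwardEulerCondition φ F dtFE) (hFd : SecondDerivativeCondition φ Fd dtFE K)
    (hr : 0 < r)
    (hpoly : r ^ 4 + 4 * K ^ 2 * r ^ 3 - 12 * K ^ 2 * r ^ 2
      - 24 * K ^ 4 * r + 24 * K ^ 4 = 0)
    (hrK : r ^ 2 ≤ 4 * K ^ 2) (hdt0 : 0 ≤ dt) (hdt : dt ≤ r * dtFE) (u : V) :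
    φ (intermediateStage F Fd dt u) ≤ φ u ∧ φ (twoStageStep F Fd dt u) ≤ φ u := by
  have hr_lt : r < 1 := lt_one_of_quartic_eq_zero hr hpoly hrK
  have hstageWeight : 4 * r * K ^ 2 + r ^ 2 ≤ 8 * K ^ 2 := by
    linarith [mul_le_mul_of_nonneg_right hr_lt.le (sq_nonneg K)]
  have hstage : φ (intermediateStage F Fd dt u) ≤ φ u :=
    intermediateStage_le hφ hK hr hstageWeight hF hFd hdt0 hdt u
  exact ⟨hstage, twoStageStep_le hφ hK hr hpoly hrK hF hFd hdt0 hdt hstage⟩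

end Monotonicity

/-- The unique two-stage fourth-order two-derivative method is SSP
with coefficient `r`, where `r > 0` is a root of
`r⁴ + 4K²r³ − 12K²r² − 24K⁴r + 24K⁴` satisfying `r² ≤ 4K²` and `4rK² + r² ≤ 8K²`:
both the intermediate stage and the update are bounded in norm by `‖u‖`. -/
theorem two_stage_fourth_order_ssp {V : Type*} [NormedAddCommGroup V] [NormedSpace ℝ V]
    (F Fd : V → V) (dtFE K : ℝ) (hdtFE : 0 < dtFE) (hK : 0 < K)
    (hFE : ∀ v : V, ∀ t : ℝ, 0 ≤ t → t ≤ dtFE → ‖v + t • F v‖ ≤ ‖v‖)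
    (hSD : ∀ v : V, ∀ t : ℝ, 0 ≤ t → t ≤ K * dtFE → ‖v + t ^ 2 • Fd v‖ ≤ ‖v‖)
    (r : ℝ) (hr : 0 < r)
    (hpoly : r ^ 4 + 4 * K ^ 2 * r ^ 3 - 12 * K ^ 2 * r ^ 2
      - 24 * K ^ 4 * r + 24 * K ^ 4 = 0)
    (hr1 : r ^ 2 ≤ 4 * K ^ 2) (hr2 : 4 * r * K ^ 2 + r ^ 2 ≤ 8 * K ^ 2)
    (u ustar unew : V) (dt : ℝ) (hdt0 : 0 ≤ dt) (hdt : dt ≤ r * dtFE)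
    (hstar : ustar = u + (dt / 2) • F u + (dt ^ 2 / 8) • Fd u)
    (hnew : unew = u + dt • F u + (dt ^ 2 / 6) • (Fd u + (2 : ℝ) • Fd ustar)) :
    ‖ustar‖ ≤ ‖u‖ ∧ ‖unew‖ ≤ ‖u‖ := by
  subst hnew hstar
  exact two_stage_fourth_order_ssp_general convexOn_univ_norm.quasiconvexOn hK hFE hSD hr hpoly hr1
    hdt0 hdt u
end
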